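/- arXiv:2601.03433 — 3 statements merged into one kernel-verified Lean document; each statement's English description precedes it below -/
import Mathlib

section
/- Let G be a finite simple graph on n vertices that is d-regular (every vertex has degree d). Then A(G) ≥ d²·n·(n−1−d) − n·d². -/
open Finset SimpleGraph
open scoped Classical

/-- `A G` is the number of ordered quadruples `(u,v,w,x)` of pairwise distinct vertices
with `uv`, `wx` edges and `vw` a non-edge (ordered alternating 3-edge paths). -/
noncomputable def A {n : ℕ} (G : SimpleGraph (Fin n)) : ℕ :=
  Finset.card <| (Finset.univ : Finset (Fin n × Fin n × Fin n × Fin n)).filter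
    fun p =>
      p.1 ≠ p.2.1 ∧ p.1 ≠ p.2.2.1 ∧ p.1 ≠ p.2.2.2 ∧
      p.2.1 ≠ p.2.2.1 ∧ p.2.1 ≠ p.2.2.2 ∧ p.2.2.1 ≠ p.2.2.2 ∧
      G.Adj p.1 p.2.1 ∧ G.Adj p.2.2.1 p.2.2.2 ∧ ¬ G.Adj p.2.1 p.2.2.1

/-!
Relaxing "pairwise distinct" to "consecutive entries distinct" gives the walks `u, v, w, x` that
alternate between `G`, its complement, and `G`. Choosing the complement edge `vw` first, there are
`deg v * deg w` of them for each ordered pair `v, w`. Since an edge is never a non-edge, only the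
coincidence `u = x` can keep a walk from being a path, and a walk with `u = x` is determined by the
vertex `u` and its ordered pair of neighbours `v, w`, which leaves at most `(deg u) ^ 2` per `u`.
-/

section AlternatingWalks

variable {V : Type*} [Fintype V] (G H : SimpleGraph V) [DecidableRel G.Adj] [DecidableRel H.Adj]

/-- The walks `(u, v, w, x)` of length three whose steps lie alternately in `G`, `H` and `G`, with
`H = Gᶜ` in the application. The entries are not required to be distinct. -/
def alternatingWalks : Finset (V × V × V × V) :=
  {p | G.Adj p.1 p.2.1 ∧ H.Adj p.2.1 p.2.2.1 ∧ G.Adj p.2.2.1 p.2.2.2}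

variable {G H} in
theorem mem_alternatingWalks {u v w x : V} :
    (u, v, w, x) ∈ alternatingWalks G H ↔ G.Adj u v ∧ H.Adj v w ∧ G.Adj w x := by
  simp only [alternatingWalks, mem_filter_univ]

theorem card_alternatingWalks :
    #(alternatingWalks G H) = ∑ v, ∑ w ∈ H.neighborFinset v, G.degree v * G.degree w := by
  have hcard : #(alternatingWalks G H) = #(univ.sigma fun v ↦ (H.neighborFinset v).sigma fun w ↦
      G.neighborFinset v ×ˢ G.neighborFinset w) := by
    refine card_nbij' (fun ⟨u, v, w, x⟩ ↦ ⟨v, w, u, x⟩) (fun ⟨v, w, u, x⟩ ↦ (u, v, w, x))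
      ?_ ?_ (fun _ _ ↦ rfl) (fun _ _ ↦ rfl)
    · rintro ⟨u, v, w, x⟩ h
      obtain ⟨huv, hvw, hwx⟩ := mem_alternatingWalks.1 h
      simp [huv.symm, hvw, hwx]
    · rintro ⟨v, w, u, x⟩ h
      simp only [coe_sigma, Set.mem_sigma_iff, mem_coe, mem_univ, true_and, mem_product,
        mem_neighborFinset] at h
      exact mem_alternatingWalks.2 ⟨h.2.1.symm, h.1, h.2.2⟩
  simp only [hcard, card_sigma, card_product, card_neighborFinset_eq_degree]

variable {G} in
theorem card_alternatingWalks_of_isRegularOfDegree {d : ℕ} (hG : G.IsRegularOfDegree d) :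
    #(alternatingWalks G H) = d ^ 2 * ∑ v, H.degree v := by
  simp only [card_alternatingWalks, hG.degree_eq, sum_const, card_neighborFinset_eq_degree,
    smul_eq_mul, mul_sum, sq, mul_comm]

theorem card_closed_alternatingWalks_le [DecidableEq V] :
    #{p ∈ alternatingWalks G H | p.1 = p.2.2.2} ≤ ∑ u, G.degree u ^ 2 := by
  calc
    _ ≤ #(univ.sigma fun u ↦ G.neighborFinset u ×ˢ G.neighborFinset u) := by
      refine card_le_card_of_injOn (fun ⟨u, v, w, _⟩ ↦ ⟨u, v, w⟩) ?_ ?_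
      · rintro ⟨u, v, w, x⟩ h
        obtain ⟨hwalk, rfl : u = x⟩ := mem_filter.1 h
        obtain ⟨huv, -, hwu⟩ := mem_alternatingWalks.1 hwalk
        simp [huv, hwu.symm]
      · rintro ⟨u, v, w, x⟩ h ⟨u', v', w', x'⟩ h' heq
        obtain rfl : u = x := (mem_filter.1 h).2
        obtain rfl : u' = x' := (mem_filter.1 h').2
        cases heq
        rfl
    _ = ∑ u, G.degree u ^ 2 := by
      simp only [card_sigma, card_product, card_neighborFinset_eq_degree, sq]

end AlternatingWalks

theorem cast_degree_compl {V R : Type*} [Fintype V] [DecidableEq V] [AddGroupWithOne R]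
    (G : SimpleGraph V) [DecidableRel G.Adj] (v : V) :
    (Gᶜ.degree v : R) = Fintype.card V - 1 - G.degree v := by
  have hdeg : G.degree v < Fintype.card V := G.degree_lt_card_verts v
  rw [degree_compl, Nat.cast_sub (by lia), Nat.cast_sub (by lia), Nat.cast_one]

theorem A_eq_card_filter_alternatingWalks {n : ℕ} (G : SimpleGraph (Fin n)) :
    A G = #{p ∈ alternatingWalks G Gᶜ | p.1 ≠ p.2.2.2} := by
  unfold A
  congr 1
  ext ⟨u, v, w, x⟩
  simp only [mem_filter, mem_univ, true_and, mem_alternatingWalks, compl_adj]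
  constructor
  · rintro ⟨-, -, hux, hvw, -, -, huv, hwx, hnvw⟩
    exact ⟨⟨huv, ⟨hvw, hnvw⟩, hwx⟩, hux⟩
  · rintro ⟨⟨huv, ⟨hvw, hnvw⟩, hwx⟩, hux⟩
    have huw : u ≠ w := fun h ↦ hnvw (h ▸ huv.symm)
    have hvx : v ≠ x := fun h ↦ hnvw (h ▸ hwx.symm)
    exact ⟨huv.ne, huw, hux, hvw, hvx, hwx.ne, huv, hwx, hnvw⟩

theorem card_alternatingWalks_compl_le {n : ℕ} (G : SimpleGraph (Fin n)) :
    #(alternatingWalks G Gᶜ) ≤ A G + ∑ u, G.degree u ^ 2 := by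
  rw [A_eq_card_filter_alternatingWalks, add_comm,
    ← card_filter_add_card_filter_not (s := alternatingWalks G Gᶜ) fun p ↦ p.1 = p.2.2.2]
  gcongr
  exact card_closed_alternatingWalks_le G Gᶜ

/-- If `G` is a `d`-regular graph on `n` vertices then
`A(G) ≥ d²·n·(n−1−d) − n·d²`. -/
theorem stmt_5 (n d : ℕ) (G : SimpleGraph (Fin n)) (hreg : G.IsRegularOfDegree d) :
    (d : ℝ) ^ 2 * n * ((n : ℝ) - 1 - d) - (n : ℝ) * (d : ℝ) ^ 2 ≤ (A G : ℝ) := by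
  have hwalks : (#(alternatingWalks G Gᶜ) : ℝ) = (d : ℝ) ^ 2 * n * ((n : ℝ) - 1 - d) := by
    rw [card_alternatingWalks_of_isRegularOfDegree Gᶜ hreg]
    push_cast
    simp only [cast_degree_compl, hreg.degree_eq, sum_const, card_univ, Fintype.card_fin,
      nsmul_eq_mul, mul_assoc]
  have hclosed : ∑ u, G.degree u ^ 2 = n * d ^ 2 := by
    simp only [hreg.degree_eq, sum_const, card_univ, Fintype.card_fin, smul_eq_mul]
  rw [← hwalks, sub_le_iff_le_add]
  exact_mod_cast hclosed ▸ card_alternatingWalks_compl_le G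
end

section
/- Fix an integer s ≥ 1 and let β ∈ [1 − 1/(2s), 1]. For every sequence (G_n)_{n≥2} of finite simple graphs, where G_n has exactly n vertices and the edge density of G_n tends to β as n → ∞, one has limsup_{n→∞} D_s(G_n)/n^{2s+2} ≤ β^{2s}(1−β). Moreover, there exists such a sequence (G_n) with edge density tending to β for which D_s(G_n)/n^{2s+2} converges to β^{2s}(1−β). -/
open Finset SimpleGraph Filter
open scoped Classical

/-- `Dstar s G` is the number of ordered `(2s+2)`-tuples
`(v₁,…,v_s, v, u, u₁,…,u_s)` of pairwise distinct vertices of `G` such that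
`v vᵢ` and `u uⱼ` are edges for all `i, j`, and `uv` is not an edge
(labeled copies of the alternating double star `D(s)`). -/
noncomputable def Dstar (s : ℕ) {n : ℕ} (G : SimpleGraph (Fin n)) : ℕ :=
  Finset.card <|
    (Finset.univ : Finset ((Fin s → Fin n) × Fin n × Fin n × (Fin s → Fin n))).filter
      fun p =>
        (Function.Injective fun i : Fin s ⊕ Fin 2 ⊕ Fin s =>
          Sum.elim p.1
            (Sum.elim (fun j : Fin 2 => if j = 0 then p.2.1 else p.2.2.1) p.2.2.2) i) ∧
        (∀ i, G.Adj p.2.1 (p.1 i)) ∧ (∀ j, G.Adj p.2.2.1 (p.2.2.2 j)) ∧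
        ¬ G.Adj p.2.1 p.2.2.1

/-- The edge density of an `n`-vertex graph: `m / (n choose 2)`. -/
noncomputable def density {n : ℕ} (G : SimpleGraph (Fin n)) : ℝ :=
  (G.edgeFinset.card : ℝ) / (n.choose 2 : ℝ)

/-!
Dropping distinctness, the number of copies of `D(s)` is `∑ d(v)^s d(u)^s` over ordered pairs of
nonadjacent (possibly equal) vertices. By `2 d(v)^s d(u)^s ≤ d(v)^(2s) + d(u)^(2s)` and symmetry it
is at most `∑ d(v)^(2s) (n - d(v))`, which after normalization is the average of `x^(2s) (1 - x)`
over `x = d(v)/n`. For `β ≥ 1 - 1/(2s)` the tangent at `β` majorizes this function on `[0, ∞)`, so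
the average is bounded by the value of the tangent at the average of `x`, which tends to `β`.

All these inequalities are asymptotically tight when every degree is `(β + o(1)) n`, and
distinctness only costs `o(n^(2s+2))` tuples. Cayley sum graphs on `ℤ/n` provide such degree
sequences.
-/

section Inequalities

variable {R : Type*} [CommRing R] [LinearOrder R] [IsStrictOrderedRing R]

theorem succ_mul_pow_mul_le_mul_pow_succ_add_pow_succ {x y : R} (hx : 0 ≤ x) (hy : 0 ≤ y)
    (n : ℕ) : (n + 1) * (x ^ n * y) ≤ n * x ^ (n + 1) + y ^ (n + 1) := by
  induction n with
  | zero => simp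
  | succ n ih =>
    have hmono : 0 ≤ (x - y) * (x ^ (n + 1) - y ^ (n + 1)) := by
      rcases le_total x y with h | h
      · exact mul_nonneg_of_nonpos_of_nonpos (sub_nonpos.2 h)
          (sub_nonpos.2 (pow_le_pow_left₀ hx h _))
      · exact mul_nonneg (sub_nonneg.2 h) (sub_nonneg.2 (pow_le_pow_left₀ hy h _))
    have hstep := mul_le_mul_of_nonneg_left ih hx
    push_cast
    linear_combination hmono + hstep

-- Below its inflection point `x ^ m * (1 - x)` is convex, yet it stays below the tangent at `β`
-- as long as that tangent is nonnegative at `0`, which is what `hm` says.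
theorem pow_mul_one_sub_le_tangent {m : ℕ} {β x : R} (hβ : 0 < β)
    (hm : (m : R) - 1 ≤ m * β) (hx : 0 ≤ x) :
    x ^ m * (1 - x) ≤
      β ^ m * (1 - β) + (m * β ^ (m - 1) - (m + 1) * β ^ m) * (x - β) := by
  cases m with
  | zero => simp
  | succ k =>
    simp only [Nat.cast_add, Nat.cast_one, add_sub_cancel_right, Nat.add_sub_cancel] at hm ⊢
    have hpow := mul_nonneg hx
      (sub_nonneg.2 (succ_mul_pow_mul_le_mul_pow_succ_add_pow_succ hx hβ.le k))
    have hpow' := mul_nonneg (sub_nonneg.2 hm)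
      (sub_nonneg.2 (succ_mul_pow_mul_le_mul_pow_succ_add_pow_succ hβ.le hx (k + 1)))
    have hscale : 0 < (k + 1) * β := by positivity
    refine le_of_mul_le_mul_left ?_ hscale
    push_cast at hpow'
    linear_combination hpow + hpow'

theorem sum_filter_mul_le_sum_card_mul_sq {ι : Type*} [Fintype ι] {r : ι → ι → Prop}
    [DecidableRel r] [Std.Symm r] (f : ι → R) :
    ∑ i, ∑ j with r i j, f i * f j ≤ ∑ i, #{j | r i j} * f i ^ 2 := by
  have hleft : ∑ i, ∑ j with r i j, f i ^ 2 = ∑ i, #{j | r i j} * f i ^ 2 := by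
    simp only [sum_const, nsmul_eq_mul]
  have hright : ∑ i, ∑ j with r i j, f j ^ 2 = ∑ i, ∑ j with r i j, f i ^ 2 :=
    sum_comm' fun i j => by simp [Std.Symm.iff (r := r) i j]
  have htwo : 2 * ∑ i, ∑ j with r i j, f i * f j ≤ ∑ i, ∑ j with r i j, (f i ^ 2 + f j ^ 2) := by
    simp only [mul_sum, ← mul_assoc]
    gcongr
    exact two_mul_le_add_sq _ _
  simp only [sum_add_distrib] at htwo
  linarith

end Inequalities

section DoubleStarHoms

variable {V : Type*} [Fintype V]

/-- Homomorphic copies of the alternating double star `D(s)` in `G`: the tuples counted by `Dstar`,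
without the requirement that their entries be distinct. -/
noncomputable def doubleStarHoms (s : ℕ) (G : SimpleGraph V) :
    Finset ((Fin s → V) × V × V × (Fin s → V)) :=
  {p | (∀ i, G.Adj p.2.1 (p.1 i)) ∧ (∀ j, G.Adj p.2.2.1 (p.2.2.2 j)) ∧ ¬ G.Adj p.2.1 p.2.2.1}

theorem degree_add_card_filter_not_adj (G : SimpleGraph V) (v : V) :
    G.degree v + #{u | ¬ G.Adj v u} = Fintype.card V := by
  rw [← card_neighborFinset_eq_degree, neighborFinset_eq_filter,
    card_filter_add_card_filter_not, card_univ]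

theorem card_doubleStarHoms (s : ℕ) (G : SimpleGraph V) :
    #(doubleStarHoms s G) = ∑ v, ∑ u with ¬ G.Adj v u, G.degree v ^ s * G.degree u ^ s := by
  have hfiber (v u : V) (hvu : ¬ G.Adj v u) :
      {p ∈ doubleStarHoms s G | (p.2.1, p.2.2.1) = (v, u)} =
        Fintype.piFinset (fun _ => G.neighborFinset v) ×ˢ {v} ×ˢ {u} ×ˢ
          Fintype.piFinset (fun _ => G.neighborFinset u) := by
    ext ⟨a, x, y, b⟩
    simp only [doubleStarHoms, mem_filter, mem_univ, true_and, Prod.mk.injEq, mem_product,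
      Fintype.mem_piFinset, mem_neighborFinset, mem_singleton]
    grind
  have hmaps : Set.MapsTo (fun p => (p.2.1, p.2.2.1))
      (doubleStarHoms s G : Set ((Fin s → V) × V × V × (Fin s → V)))
      ({q : V × V | ¬ G.Adj q.1 q.2} : Finset (V × V)) := fun p hp => by
    simp only [doubleStarHoms, coe_filter, mem_univ, true_and, Set.mem_ofPred_eq] at hp ⊢
    exact hp.2.2
  rw [card_eq_sum_card_fiberwise hmaps,
    sum_finset_product _ univ (fun v => {u | ¬ G.Adj v u}) (by simp)]
  refine sum_congr rfl fun v _ => sum_congr rfl fun u hu => ?_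
  rw [hfiber v u (mem_filter.1 hu).2]
  simp

theorem card_doubleStarHoms_le (s : ℕ) (G : SimpleGraph V) :
    (#(doubleStarHoms s G) : ℝ) ≤
      ∑ v, (G.degree v : ℝ) ^ (2 * s) * (Fintype.card V - G.degree v) := by
  have : Std.Symm fun v u => ¬ G.Adj v u := ⟨fun _ _ hvu huv => hvu huv.symm⟩
  rw [card_doubleStarHoms]
  push_cast
  refine (sum_filter_mul_le_sum_card_mul_sq (r := fun v u => ¬ G.Adj v u)
    (fun v => (G.degree v : ℝ) ^ s)).trans_eq (sum_congr rfl fun v _ => ?_)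
  rw [← degree_add_card_filter_not_adj G v]
  push_cast
  ring

theorem card_doubleStarHoms_le_maxDegree (s : ℕ) (G : SimpleGraph V) :
    (#(doubleStarHoms s G) : ℝ) ≤
      Fintype.card V * ((G.maxDegree : ℝ) ^ (2 * s) * (Fintype.card V - G.minDegree)) := by
  refine (card_doubleStarHoms_le s G).trans ?_
  rw [← nsmul_eq_mul, ← card_univ]
  refine sum_le_card_nsmul _ _ _ fun v _ => ?_
  have : (G.degree v : ℝ) ≤ #(univ : Finset V) := mod_cast (G.degree_lt_card_verts v).le
  gcongr
  · exact G.degree_le_maxDegree v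
  · exact G.minDegree_le_degree v

theorem le_card_doubleStarHoms (s : ℕ) (G : SimpleGraph V) :
    Fintype.card V * ((G.minDegree : ℝ) ^ (2 * s) * (Fintype.card V - G.maxDegree)) ≤
      #(doubleStarHoms s G) := by
  have hcard (v : V) : (Fintype.card V : ℝ) - G.maxDegree ≤ #{u | ¬ G.Adj v u} := by
    have := degree_add_card_filter_not_adj G v
    have := G.degree_le_maxDegree v
    rw [sub_le_iff_le_add]
    norm_cast
    lia
  rw [card_doubleStarHoms, ← nsmul_eq_mul, ← card_univ]
  push_cast
  refine card_nsmul_le_sum _ _ _ fun v _ => ?_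
  calc (G.minDegree : ℝ) ^ (2 * s) * (#(univ : Finset V) - G.maxDegree)
      ≤ (G.minDegree : ℝ) ^ (2 * s) * #{u | ¬ G.Adj v u} := by gcongr; exact hcard v
    _ = ∑ u with ¬ G.Adj v u, (G.minDegree : ℝ) ^ s * (G.minDegree : ℝ) ^ s := by
      rw [sum_const, nsmul_eq_mul, mul_comm, two_mul, pow_add]
    _ ≤ _ := by gcongr <;> exact G.minDegree_le_degree _

end DoubleStarHoms

section InjectiveTuples

theorem card_filter_injective {α β : Type*} [Fintype α] [Fintype β] :
    #{f : α → β | Function.Injective f} = (Fintype.card β).descFactorial (Fintype.card α) := by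
  rw [← Fintype.card_subtype, ← Fintype.card_embedding_eq]
  exact Fintype.card_congr (Equiv.subtypeInjectiveEquivEmbedding α β)

/-- The tuple `(v₁,…,v_s, v, u, u₁,…,u_s)` seen as a single function, in the form whose injectivity
`Dstar` requires. -/
def doubleStarTupleEquiv (s : ℕ) (V : Type*) :
    ((Fin s → V) × V × V × (Fin s → V)) ≃ (Fin s ⊕ Fin 2 ⊕ Fin s → V) where
  toFun p := Sum.elim p.1 (Sum.elim (fun j => if j = 0 then p.2.1 else p.2.2.1) p.2.2.2)
  invFun f := (fun i => f (.inl i), f (.inr (.inl 0)), f (.inr (.inl 1)),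
    fun i => f (.inr (.inr i)))
  left_inv _ := rfl
  right_inv f := by
    ext (i | j | i)
    · rfl
    · fin_cases j <;> rfl
    · rfl

theorem card_filter_injective_doubleStarTupleEquiv (s : ℕ) (V : Type*) [Fintype V] :
    #{p | Function.Injective (doubleStarTupleEquiv s V p)} =
      (Fintype.card V).descFactorial (2 * s + 2) := by
  have hcard : Fintype.card (Fin s ⊕ Fin 2 ⊕ Fin s) = 2 * s + 2 := by
    simp only [Fintype.card_sum, Fintype.card_fin]
    ring
  rw [← hcard, ← card_filter_injective]
  exact card_equiv (doubleStarTupleEquiv s V) (by simp)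

variable (s : ℕ) {n : ℕ} (G : SimpleGraph (Fin n))

theorem dstar_eq_card_filter_doubleStarHoms :
    Dstar s G =
      #{p ∈ doubleStarHoms s G | Function.Injective (doubleStarTupleEquiv s (Fin n) p)} := by
  rw [doubleStarHoms, filter_filter, Dstar]
  exact congrArg _ (filter_congr fun _ _ => and_comm)

theorem dstar_le_card_doubleStarHoms : Dstar s G ≤ #(doubleStarHoms s G) :=
  (dstar_eq_card_filter_doubleStarHoms s G).trans_le (card_filter_le _ _)

theorem card_doubleStarHoms_add_descFactorial_le :
    #(doubleStarHoms s G) + n.descFactorial (2 * s + 2) ≤ Dstar s G + n ^ (2 * s + 2) := by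
  have htuples : Fintype.card ((Fin s → Fin n) × Fin n × Fin n × (Fin s → Fin n)) =
      n ^ (2 * s + 2) := by
    simp only [Fintype.card_prod, Fintype.card_fin, Fintype.card_fun]
    ring
  have hinj := card_filter_injective_doubleStarTupleEquiv s (Fin n)
  rw [Fintype.card_fin] at hinj
  rw [dstar_eq_card_filter_doubleStarHoms, ← filter_univ_mem (doubleStarHoms s G), filter_filter,
    ← hinj, ← htuples, filter_and, ← card_union_add_card_inter, add_comm]
  gcongr
  exact card_le_univ _

end InjectiveTuples

theorem div_pow_mul_one_sub_div {K : Type*} [Field K] {c : K} (hc : c ≠ 0) (a b : K) (k : ℕ) :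
    (a / c) ^ k * (1 - b / c) = a ^ k * (c - b) / c ^ (k + 1) := by
  rw [div_pow, one_sub_div hc, div_mul_div_comm, pow_succ]

section UpperBound

variable {n : ℕ} (G : SimpleGraph (Fin n))

theorem dstar_div_pow_le (s : ℕ) :
    Dstar s G / (n : ℝ) ^ (2 * s + 2) ≤
      (∑ v, (G.degree v / n : ℝ) ^ (2 * s) * (1 - G.degree v / n)) / n := by
  rcases n.eq_zero_or_pos with rfl | hn
  · simp
  have hle : (Dstar s G : ℝ) ≤ ∑ v, (G.degree v : ℝ) ^ (2 * s) * (n - G.degree v) := by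
    simpa using (Nat.cast_le.2 (dstar_le_card_doubleStarHoms s G)).trans
      (card_doubleStarHoms_le s G)
  simp only [div_pow_mul_one_sub_div (Nat.cast_ne_zero.2 hn.ne' : (n : ℝ) ≠ 0), ← sum_div, div_div,
    ← pow_succ]
  gcongr

theorem dstar_div_pow_le_tangent (hn : 0 < n) {s : ℕ} {β : ℝ} (hβ : 0 < β)
    (hβs : 2 * s - 1 ≤ 2 * s * β) :
    Dstar s G / (n : ℝ) ^ (2 * s + 2) ≤ β ^ (2 * s) * (1 - β) +
      (2 * s * β ^ (2 * s - 1) - (2 * s + 1) * β ^ (2 * s)) *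
        ((∑ v, (G.degree v : ℝ)) / n ^ 2 - β) := by
  have htangent (v : Fin n) := pow_mul_one_sub_le_tangent (m := 2 * s) hβ (by exact_mod_cast hβs)
    (by positivity : (0 : ℝ) ≤ G.degree v / n)
  push_cast at htangent
  refine (dstar_div_pow_le G s).trans ?_
  rw [div_le_iff₀ (by positivity)]
  refine (sum_le_sum fun v _ => htangent v).trans_eq ?_
  simp only [sum_add_distrib, ← mul_sum, sum_sub_distrib, ← sum_div, sum_const, card_univ,
    Fintype.card_fin, nsmul_eq_mul]
  field_simp

theorem sum_degree_div_sq_eq_density_mul :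
    (∑ v, (G.degree v : ℝ)) / n ^ 2 = density G * (1 - 1 / n) := by
  rcases n.eq_zero_or_pos with rfl | hn
  · simp [density]
  have hedges : (G.edgeFinset.card : ℝ) = density G * n.choose 2 := by
    refine (div_mul_cancel_of_imp fun h => ?_).symm
    have := G.card_edgeFinset_le_card_choose_two
    rw [Fintype.card_fin, Nat.cast_eq_zero.1 h] at this
    simpa using this
  rw [← Nat.cast_sum, sum_degrees_eq_twice_card_edges, Nat.cast_mul, hedges,
    Nat.cast_choose_two, Nat.cast_ofNat]
  field_simp

end UpperBound

section Limits

variable {β : ℝ} {G : (n : ℕ) → SimpleGraph (Fin n)}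

theorem tendsto_density_iff :
    Tendsto (fun n => density (G n)) atTop (nhds β) ↔
      Tendsto (fun n => (∑ v, ((G n).degree v : ℝ)) / n ^ 2) atTop (nhds β) := by
  have hfactor : Tendsto (fun n : ℕ => 1 - 1 / (n : ℝ)) atTop (nhds 1) := by
    simpa using tendsto_one_div_atTop_nhds_zero_nat.const_sub (1 : ℝ)
  refine (Asymptotics.isEquivalent_iff_exists_eq_mul.2 ⟨_, hfactor, ?_⟩).symm.tendsto_nhds_iff
  exact .of_forall fun n => (sum_degree_div_sq_eq_density_mul _).trans (mul_comm _ _)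

theorem limsup_dstar_div_pow_le {s : ℕ} (hβ : 0 < β) (hβs : 2 * s - 1 ≤ 2 * s * β)
    (hG : Tendsto (fun n => density (G n)) atTop (nhds β)) :
    limsup (fun n => Dstar s (G n) / (n : ℝ) ^ (2 * s + 2)) atTop ≤ β ^ (2 * s) * (1 - β) := by
  have htangent := (((tendsto_density_iff.1 hG).sub_const β).const_mul
    (2 * s * β ^ (2 * s - 1) - (2 * s + 1) * β ^ (2 * s))).const_add (β ^ (2 * s) * (1 - β))
  rw [sub_self, mul_zero, add_zero] at htangent
  rw [← htangent.limsup_eq]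
  refine limsup_le_limsup ?_ ?_ htangent.isBoundedUnder_le
  · filter_upwards [eventually_gt_atTop 0] with n hn
    exact dstar_div_pow_le_tangent (G n) hn hβ hβs
  · exact (isBoundedUnder_of ⟨0, fun n => by positivity⟩ :
      IsBoundedUnder (· ≥ ·) _ _).isCoboundedUnder_le

theorem tendsto_card_doubleStarHoms_sub_dstar_div_pow (s : ℕ)
    (G : (n : ℕ) → SimpleGraph (Fin n)) :
    Tendsto (fun n => (#(doubleStarHoms s (G n)) - Dstar s (G n) : ℝ) / n ^ (2 * s + 2)) atTop
      (nhds 0) := by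
  have hne : ∀ᶠ n : ℕ in atTop, (n : ℝ) ^ (2 * s + 2) ≠ 0 := by
    filter_upwards [eventually_ne_atTop 0] with n hn
    positivity
  have hdesc := ((Asymptotics.isEquivalent_iff_tendsto_one hne).1
    (isEquivalent_descFactorial (2 * s + 2))).const_sub 1
  rw [sub_self] at hdesc
  refine tendsto_of_tendsto_of_tendsto_of_le_of_le' tendsto_const_nhds hdesc ?_ ?_
  · refine .of_forall fun n => div_nonneg (sub_nonneg.2 ?_) (by positivity)
    exact_mod_cast dstar_le_card_doubleStarHoms s (G n)
  · filter_upwards [hne] with n hn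
    have hle : (#(doubleStarHoms s (G n)) + n.descFactorial (2 * s + 2) : ℝ) ≤
        Dstar s (G n) + n ^ (2 * s + 2) :=
      mod_cast card_doubleStarHoms_add_descFactorial_le s (G n)
    simp only [Pi.div_apply]
    rw [one_sub_div hn]
    gcongr ?_ / _
    linarith

theorem tendsto_density_of_tendsto_minDegree_maxDegree
    (hδ : Tendsto (fun n => ((G n).minDegree / n : ℝ)) atTop (nhds β))
    (hΔ : Tendsto (fun n => ((G n).maxDegree / n : ℝ)) atTop (nhds β)) :
    Tendsto (fun n => density (G n)) atTop (nhds β) := by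
  refine tendsto_density_iff.2 (tendsto_of_tendsto_of_tendsto_of_le_of_le' hδ hΔ ?_ ?_)
  · filter_upwards [eventually_gt_atTop 0] with n hn
    have := card_nsmul_le_sum univ (fun v => ((G n).degree v : ℝ)) _
      fun v _ => Nat.cast_le.2 ((G n).minDegree_le_degree v)
    rw [card_univ, Fintype.card_fin, nsmul_eq_mul] at this
    rw [div_le_div_iff₀ (by positivity) (by positivity)]
    nlinarith
  · filter_upwards [eventually_gt_atTop 0] with n hn
    have := sum_le_card_nsmul univ (fun v => ((G n).degree v : ℝ)) _
      fun v _ => Nat.cast_le.2 ((G n).degree_le_maxDegree v)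
    rw [card_univ, Fintype.card_fin, nsmul_eq_mul] at this
    rw [div_le_div_iff₀ (by positivity) (by positivity)]
    nlinarith

theorem tendsto_dstar_div_pow_of_tendsto_minDegree_maxDegree (s : ℕ)
    (hδ : Tendsto (fun n => ((G n).minDegree / n : ℝ)) atTop (nhds β))
    (hΔ : Tendsto (fun n => ((G n).maxDegree / n : ℝ)) atTop (nhds β)) :
    Tendsto (fun n => Dstar s (G n) / (n : ℝ) ^ (2 * s + 2)) atTop
      (nhds (β ^ (2 * s) * (1 - β))) := by
  have hnormalize {n : ℕ} (hn : 0 < n) (a b : ℝ) :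
      (a / n) ^ (2 * s) * (1 - b / n) = n * (a ^ (2 * s) * (n - b)) / n ^ (2 * s + 2) := by
    have hn' : (n : ℝ) ≠ 0 := Nat.cast_ne_zero.2 hn.ne'
    rw [div_pow_mul_one_sub_div hn', ← mul_div_mul_left _ _ hn', ← pow_succ']
  have hhoms : Tendsto (fun n => #(doubleStarHoms s (G n)) / (n : ℝ) ^ (2 * s + 2)) atTop
      (nhds (β ^ (2 * s) * (1 - β))) := by
    refine tendsto_of_tendsto_of_tendsto_of_le_of_le' ((hδ.pow (2 * s)).mul (hΔ.const_sub 1))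
      ((hΔ.pow (2 * s)).mul (hδ.const_sub 1)) ?_ ?_
    · filter_upwards [eventually_gt_atTop 0] with n hn
      rw [hnormalize hn]
      gcongr
      simpa using le_card_doubleStarHoms s (G n)
    · filter_upwards [eventually_gt_atTop 0] with n hn
      rw [hnormalize hn]
      gcongr
      simpa using card_doubleStarHoms_le_maxDegree s (G n)
  have := hhoms.sub (tendsto_card_doubleStarHoms_sub_dstar_div_pow s G)
  simpa only [sub_zero, ← sub_div, sub_sub_cancel] using this

end Limits

section SumGraph

variable {A : Type*}

/-- The Cayley sum graph of `S`, with `a` adjacent to `b ≠ a` when `a + b ∈ S`. Its degrees are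
`#S` or `#S - 1`, without any restriction on the parity of `#S`. -/
def sumGraph [AddCommMagma A] (S : Set A) : SimpleGraph A :=
  .fromRel fun a b => a + b ∈ S

theorem neighborFinset_sumGraph [AddCommGroup A] [Fintype A] (S : Finset A) (a : A) :
    (sumGraph (S : Set A)).neighborFinset a =
      (S.map (Equiv.subRight a).toEmbedding).erase a := by
  ext b
  rw [mem_neighborFinset]
  simp only [sumGraph, fromRel_adj, mem_coe, add_comm b a, or_self, mem_erase, mem_map_equiv,
    Equiv.subRight_symm_apply, ne_comm]

theorem maxDegree_sumGraph_le [AddCommGroup A] [Fintype A] (S : Finset A) :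
    (sumGraph (S : Set A)).maxDegree ≤ #S := by
  refine maxDegree_le_of_forall_degree_le _ _ fun a => ?_
  rw [← card_neighborFinset_eq_degree, neighborFinset_sumGraph]
  exact (card_erase_le).trans_eq (card_map _)

theorem card_sub_one_le_minDegree_sumGraph [AddCommGroup A] [Fintype A] (S : Finset A) :
    #S - 1 ≤ (sumGraph (S : Set A)).minDegree := by
  refine le_minDegree_of_forall_le_degree _ _ fun a => ?_
  rw [← card_neighborFinset_eq_degree, neighborFinset_sumGraph,
    ← card_map (Equiv.subRight a).toEmbedding]
  exact pred_card_le_card_erase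

theorem exists_tendsto_minDegree_maxDegree {β : ℝ} (hβ₀ : 0 ≤ β) (hβ₁ : β ≤ 1) :
    ∃ G : (n : ℕ) → SimpleGraph (Fin n),
      Tendsto (fun n => ((G n).minDegree / n : ℝ)) atTop (nhds β) ∧
      Tendsto (fun n => ((G n).maxDegree / n : ℝ)) atTop (nhds β) := by
  let S (n : ℕ) : Finset (Fin n) := {i | i.val < ⌊β * n⌋₊}
  have hS (n : ℕ) : #(S n) = ⌊β * n⌋₊ := by
    have : ⌊β * n⌋₊ ≤ n := Nat.floor_le_of_le (mul_le_of_le_one_left n.cast_nonneg hβ₁)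
    rw [Fin.card_filter_val_lt, min_eq_right this]
  have hupper : Tendsto (fun n : ℕ => (⌊β * n⌋₊ / n : ℝ)) atTop (nhds β) :=
    (tendsto_nat_floor_mul_div_atTop hβ₀).comp tendsto_natCast_atTop_atTop
  have hlower : Tendsto (fun n : ℕ => (⌊β * n⌋₊ / n - 1 / n : ℝ)) atTop (nhds β) := by
    simpa using hupper.sub tendsto_one_div_atTop_nhds_zero_nat
  let G (n : ℕ) : SimpleGraph (Fin n) := sumGraph (S n)
  have hmin : ∀ᶠ n : ℕ in atTop, (⌊β * n⌋₊ / n - 1 / n : ℝ) ≤ (G n).minDegree / n := by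
    filter_upwards [eventually_gt_atTop 0] with n hn
    have : NeZero n := ⟨hn.ne'⟩
    have := card_sub_one_le_minDegree_sumGraph (S n)
    rw [← sub_div]
    gcongr
    rw [sub_le_iff_le_add, ← hS]
    exact_mod_cast Nat.sub_le_iff_le_add.1 this
  have hmax : ∀ᶠ n : ℕ in atTop, ((G n).maxDegree / n : ℝ) ≤ ⌊β * n⌋₊ / n := by
    filter_upwards [eventually_gt_atTop 0] with n hn
    have : NeZero n := ⟨hn.ne'⟩
    rw [← hS]
    gcongr
    exact maxDegree_sumGraph_le (S n)
  have hmin_le_max (n : ℕ) : ((G n).minDegree / n : ℝ) ≤ (G n).maxDegree / n := by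
    gcongr
    exact minDegree_le_maxDegree _
  exact ⟨G,
    tendsto_of_tendsto_of_tendsto_of_le_of_le' hlower hupper hmin
      (hmax.mono fun n => (hmin_le_max n).trans),
    tendsto_of_tendsto_of_tendsto_of_le_of_le' hlower hupper
      (hmin.mono fun n h => h.trans (hmin_le_max n)) hmax⟩

end SumGraph

/-- `I(D(s), β) = β^{2s}(1−β)` for `β ∈ [1 − 1/(2s), 1]`: every sequence of graphs with
edge density tending to `β` has `limsup D_s(G_n)/n^{2s+2} ≤ β^{2s}(1−β)`, and this bound
is attained by some sequence. -/
theorem stmt_11 (s : ℕ) (hs : 1 ≤ s) (β : ℝ)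
    (hβl : 1 - 1 / (2 * s : ℝ) ≤ β) (hβu : β ≤ 1) :
    (∀ G : (n : ℕ) → SimpleGraph (Fin n),
      Tendsto (fun n => density (G n)) atTop (nhds β) →
      limsup (fun n => (Dstar s (G n) : ℝ) / (n : ℝ) ^ (2 * s + 2)) atTop ≤
        β ^ (2 * s) * (1 - β)) ∧
    (∃ G : (n : ℕ) → SimpleGraph (Fin n),
      Tendsto (fun n => density (G n)) atTop (nhds β) ∧
      Tendsto (fun n => (Dstar s (G n) : ℝ) / (n : ℝ) ^ (2 * s + 2)) atTop
        (nhds (β ^ (2 * s) * (1 - β)))) := by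
  have hinv : 1 / (2 * s : ℝ) ≤ 1 / 2 := by
    have : (1 : ℝ) ≤ s := mod_cast hs
    gcongr
    linarith
  have hβ : 0 < β := by linarith
  constructor
  · have hs' : 2 * s - 1 ≤ 2 * s * β := by
      have := mul_le_mul_of_nonneg_left hβl (by positivity : (0 : ℝ) ≤ 2 * s)
      rwa [mul_sub, mul_one_div_cancel (by positivity), mul_one] at this
    exact fun G hG => limsup_dstar_div_pow_le hβ hs' hG
  · obtain ⟨G, hδ, hΔ⟩ := exists_tendsto_minDegree_maxDegree hβ.le hβu
    exact ⟨G, tendsto_density_of_tendsto_minDegree_maxDegree hδ hΔ,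
      tendsto_dstar_div_pow_of_tendsto_minDegree_maxDegree s hδ hΔ⟩
end

section
/- Let G be a finite simple graph on n ≥ 1 vertices with m edges. Then AC(G) ≤ 4m² − 4m²/n − 8m³/n². -/
open Finset SimpleGraph
open scoped Classical

/-- `AC G` is the number of ordered quadruples `(u,v,w,x)` of pairwise distinct vertices
with `uv`, `wx` edges and `vw`, `xu` non-edges (labeled alternating 4-cycles). -/
noncomputable def AC {n : ℕ} (G : SimpleGraph (Fin n)) : ℕ :=
  Finset.card <| (Finset.univ : Finset (Fin n × Fin n × Fin n × Fin n)).filter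
    fun p =>
      p.1 ≠ p.2.1 ∧ p.1 ≠ p.2.2.1 ∧ p.1 ≠ p.2.2.2 ∧
      p.2.1 ≠ p.2.2.1 ∧ p.2.1 ≠ p.2.2.2 ∧ p.2.2.1 ≠ p.2.2.2 ∧
      G.Adj p.1 p.2.1 ∧ G.Adj p.2.2.1 p.2.2.2 ∧
      ¬ G.Adj p.2.1 p.2.2.1 ∧ ¬ G.Adj p.2.2.2 p.1

/-!
Forget the condition `¬ G.Adj x u`, and the distinctness conditions other than `v ≠ w`. What remains
is to choose two distinct non-adjacent vertices `v`, `w`, then a neighbour `u` of `v` and a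
neighbour `x` of `w`. The number of such choices is `(∑ d)²`, less the diagonal part `∑ d(v)²` and
the part over adjacent pairs `∑_{v ~ w} d(v) d(w)`, that is, the number of walks of length three.
The diagonal part is at least `(2m)² / n` by Cauchy-Schwarz. The adjacent part is at least
`(2m)³ / n²`: apply the AM-GM inequality `3c² ≤ ab + c³/a + c³/b` with `a = n d(v)`, `b = n d(w)`,
`c = 2m` to each adjacent pair, with equality at regular graphs, and sum; the sum of `1 / a` over all
adjacent pairs is at most `1`.
-/

lemma three_mul_sq_le_mul_add_div_add_div {a b c : ℝ} (ha : 0 < a) (hb : 0 < b) (hc : 0 ≤ c) :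
    3 * c ^ 2 ≤ a * b + c ^ 3 / a + c ^ 3 / b := by
  obtain ⟨s, hs, rfl⟩ : ∃ s : ℝ, 0 < s ∧ a = s ^ 2 :=
    ⟨√a, Real.sqrt_pos.2 ha, (Real.sq_sqrt ha.le).symm⟩
  obtain ⟨t, ht, rfl⟩ : ∃ t : ℝ, 0 < t ∧ b = t ^ 2 :=
    ⟨√b, Real.sqrt_pos.2 hb, (Real.sq_sqrt hb.le).symm⟩
  have sum_of_squares : s ^ 2 * t ^ 2 + c ^ 3 / s ^ 2 + c ^ 3 / t ^ 2 - 3 * c ^ 2 =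
      c ^ 3 * (s⁻¹ - t⁻¹) ^ 2 + (s * t - c) ^ 2 * (s * t + 2 * c) / (s * t) := by
    field_simp
    ring
  rw [← sub_nonneg, sum_of_squares]
  positivity

lemma sum_div_card_mul_le_one {ι : Type*} [Fintype ι] (f : ι → ℝ) :
    ∑ i, f i / (Fintype.card ι * f i) ≤ 1 :=
  calc
    ∑ i, f i / (Fintype.card ι * f i) ≤ ∑ _i : ι, (Fintype.card ι : ℝ)⁻¹ := by
      gcongr with i
      rw [div_mul_eq_div_div_swap, div_eq_mul_inv]
      exact mul_le_of_le_one_left (by positivity) (div_self_le_one _)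
    _ = Fintype.card ι * (Fintype.card ι : ℝ)⁻¹ := by simp
    _ ≤ 1 := mul_inv_le_one

/-- For a 0-1 matrix this is Sidorenko's inequality for the path with three edges. -/
theorem sum_pow_three_le_card_mul_card_mul_sum {ι κ : Type*} [Fintype ι] [Fintype κ]
    {A : ι → κ → ℝ} (hA : ∀ i j, 0 ≤ A i j) :
    (∑ i, ∑ j, A i j) ^ 3 ≤ Fintype.card ι * Fintype.card κ *
      ∑ i, ∑ j, A i j * ((∑ l, A i l) * ∑ k, A k j) := by
  set r : ι → ℝ := fun i => ∑ j, A i j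
  set s : κ → ℝ := fun j => ∑ i, A i j
  set E : ℝ := ∑ i, r i
  have E_nonneg : 0 ≤ E := sum_nonneg fun i _ => sum_nonneg fun j _ => hA i j
  have entry_bound (i : ι) (j : κ) : A i j * (3 * E ^ 2) ≤
      A i j * (Fintype.card ι * r i * (Fintype.card κ * s j) +
        E ^ 3 / (Fintype.card ι * r i) + E ^ 3 / (Fintype.card κ * s j)) := by
    obtain hij | hij := (hA i j).eq_or_lt
    · simp [← hij]
    have row_pos : 0 < r i := hij.trans_le (single_le_sum (fun l _ => hA i l) (mem_univ j))
    have col_pos : 0 < s j :=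
      hij.trans_le (single_le_sum (f := fun k => A k j) (fun k _ => hA k j) (mem_univ i))
    have : Nonempty ι := ⟨i⟩
    have : Nonempty κ := ⟨j⟩
    exact mul_le_mul_of_nonneg_left
      (three_mul_sq_le_mul_add_div_add_div (by positivity) (by positivity) E_nonneg) hij.le
  have row_part : ∑ i, ∑ j, A i j * (E ^ 3 / (Fintype.card ι * r i)) ≤ E ^ 3 := by
    have := mul_le_of_le_one_right (pow_nonneg E_nonneg 3) (sum_div_card_mul_le_one r)
    simpa only [← sum_mul, mul_sum, mul_div_left_comm] using this
  have col_part : ∑ i, ∑ j, A i j * (E ^ 3 / (Fintype.card κ * s j)) ≤ E ^ 3 := by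
    have := mul_le_of_le_one_right (pow_nonneg E_nonneg 3) (sum_div_card_mul_le_one s)
    rw [sum_comm]
    simpa only [← sum_mul, mul_sum, mul_div_left_comm] using this
  have main_part : ∑ i, ∑ j, A i j * (Fintype.card ι * r i * (Fintype.card κ * s j)) =
      Fintype.card ι * Fintype.card κ * ∑ i, ∑ j, A i j * (r i * s j) := by
    simp only [mul_sum]
    exact sum_congr rfl fun i _ => sum_congr rfl fun j _ => by ring
  have total_bound := sum_le_sum fun i (_ : i ∈ univ) =>
    sum_le_sum fun j (_ : j ∈ univ) => entry_bound i j
  simp only [mul_add, sum_add_distrib, ← sum_mul] at total_bound row_part col_part main_part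
  linarith

section Graph

variable {V : Type*} [Fintype V] (G : SimpleGraph V) [DecidableRel G.Adj]

lemma sq_two_mul_card_edgeFinset_le :
    (2 * #G.edgeFinset) ^ 2 ≤ Fintype.card V * ∑ v, G.degree v ^ 2 := by
  rw [← G.sum_degrees_eq_twice_card_edges]
  exact sq_sum_le_card_mul_sum_sq

lemma two_mul_card_edgeFinset_pow_three_le :
    (2 * #G.edgeFinset) ^ 3 ≤
      Fintype.card V ^ 2 * ∑ v, ∑ w ∈ G.neighborFinset v, G.degree v * G.degree w := by
  have adj_sum (f : V → ℝ) (v : V) :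
      ∑ w, G.adjMatrix ℝ v w * f w = ∑ w ∈ G.neighborFinset v, f w :=
    G.adjMatrix_mulVec_apply v f
  have row_sum (v : V) : ∑ w, G.adjMatrix ℝ v w = G.degree v := by
    simpa using adj_sum 1 v
  have col_sum (w : V) : ∑ v, G.adjMatrix ℝ v w = G.degree w := by
    simpa only [adjMatrix_apply, G.adj_comm w] using row_sum w
  have adjMatrix_nonneg (v w : V) : 0 ≤ G.adjMatrix ℝ v w := by
    rw [adjMatrix_apply]; split_ifs <;> norm_num
  have := sum_pow_three_le_card_mul_card_mul_sum adjMatrix_nonneg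
  simp only [row_sum, col_sum, adj_sum, ← sq] at this
  rw [← G.sum_degrees_eq_twice_card_edges]
  exact_mod_cast this

variable [DecidableEq V]

lemma add_sum_neighborFinset_add_sum_compl_neighborFinset {M : Type*} [AddCommMonoid M]
    (f : V → M) (v : V) :
    f v + ∑ w ∈ G.neighborFinset v, f w + ∑ w ∈ Gᶜ.neighborFinset v, f w = ∑ w, f w := by
  have hv : v ∉ G.neighborFinset v := by simp
  rw [← sum_insert hv, neighborFinset_compl, sdiff_singleton_eq_erase, ← compl_insert,
    sum_add_sum_compl]

lemma sum_degree_sq_add_sum_adj_add_sum_compl_adj :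
    ∑ v, G.degree v ^ 2 + ∑ v, ∑ w ∈ G.neighborFinset v, G.degree v * G.degree w +
      ∑ v, ∑ w ∈ Gᶜ.neighborFinset v, G.degree v * G.degree w = (2 * #G.edgeFinset) ^ 2 := by
  simp only [← G.sum_degrees_eq_twice_card_edges, sq, sum_mul_sum, ← sum_add_distrib]
  exact sum_congr rfl fun v _ =>
    add_sum_neighborFinset_add_sum_compl_neighborFinset G (fun w => G.degree v * G.degree w) v

end Graph

lemma AC_le_sum_compl_neighborFinset {n : ℕ} (G : SimpleGraph (Fin n)) [DecidableRel G.Adj] :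
    AC G ≤ ∑ v, ∑ w ∈ Gᶜ.neighborFinset v, G.degree v * G.degree w := by
  let outerPairs := (univ : Finset (Fin n)).sigma fun v =>
    (Gᶜ.neighborFinset v).sigma fun w => G.neighborFinset v ×ˢ G.neighborFinset w
  calc
    AC G ≤ #outerPairs := by
      refine card_le_card_of_injOn (fun (u, v, w, x) => ⟨v, w, u, x⟩) ?_ ?_
      · rintro ⟨u, v, w, x⟩ h
        simp_all [outerPairs, G.adj_comm]
      · rintro ⟨u, v, w, x⟩ - ⟨u', v', w', x'⟩ - h
        simp_all
    _ = _ := by simp [outerPairs, card_sigma]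

/-- For a graph on `n ≥ 1` vertices with `m` edges,
`AC(G) ≤ 4m² − 4m²/n − 8m³/n²`. -/
theorem stmt_12 (n : ℕ) (hn : 1 ≤ n) (G : SimpleGraph (Fin n))
    (m : ℕ) (hm : G.edgeFinset.card = m) :
    (AC G : ℝ) ≤ 4 * (m : ℝ) ^ 2 - 4 * (m : ℝ) ^ 2 / (n : ℝ)
      - 8 * (m : ℝ) ^ 3 / (n : ℝ) ^ 2 := by
  subst hm
  have : (0 : ℝ) < n := by exact_mod_cast hn
  have h_AC := AC_le_sum_compl_neighborFinset G
  have h_split := sum_degree_sq_add_sum_adj_add_sum_compl_adj G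
  have h_diag := sq_two_mul_card_edgeFinset_le G
  have h_adj := two_mul_card_edgeFinset_pow_three_le G
  rify [Fintype.card_fin] at h_AC h_split h_diag h_adj
  rw [mul_pow, ← div_le_iff₀' (by positivity)] at h_diag h_adj
  linarith
end
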